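/- Let μ be a Borel probability measure on X such that each heat flow Φ_j (0 ≤ j ≤ n) and each L H_k (1 ≤ k ≤ n) is μ-integrable and ∫ (L H_k) dμ = 0 for all k (infinitesimal invariance of μ tested on the local energies). Then the mean heat flow is the same everywhere along the chain: ∫ Φ_j dμ = ∫ Φ₀ dμ for all 0 ≤ j ≤ n; in particular the mean entropy production ∫ σ_j dμ does not depend on j. -/

import Mathlib

open scoped BigOperators

noncomputable section

/-- `Vc d` : vectors in ℝ^d. -/
abbrev Vc (d : ℕ) := Fin d → ℝ
/-- Configurations of `m` oscillators. -/
abbrev Cfg (m d : ℕ) := Fin m → Vc d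
/-- Phase space X = p × q × r₁ × rₙ (for a chain of `m` oscillators). -/
abbrev Phs (m d : ℕ) := Cfg m d × Cfg m d × Vc d × Vc d

variable {m d : ℕ}

/-- unit coordinate vector in the p-block -/
def eP (i : Fin m) (a : Fin d) : Phs m d := (Pi.single i (Pi.single a 1), 0, 0, 0)
/-- unit coordinate vector in the q-block -/
def eQ (i : Fin m) (a : Fin d) : Phs m d := (0, Pi.single i (Pi.single a 1), 0, 0)
/-- unit coordinate vector in the r₁-block -/
def eR1 (a : Fin d) : Phs m d := (0, 0, Pi.single a 1, 0)
/-- unit coordinate vector in the rₙ-block -/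
def eRn (a : Fin d) : Phs m d := (0, 0, 0, Pi.single a 1)

/-- directional (partial) derivative -/
def PD (f : Phs m d → ℝ) (x v : Phs m d) : ℝ := fderiv ℝ f x v

variable {n : ℕ}

/-- total potential V(q) = Σᵢ U⁽¹⁾(qᵢ) + Σᵢ U⁽²⁾(qᵢ − qᵢ₊₁) of a chain of n+2 oscillators -/
def Vtot (U1 U2 : Vc d → ℝ) (q : Cfg (n+2) d) : ℝ :=
  (∑ i, U1 (q i)) + ∑ i : Fin (n+1), U2 (q i.castSucc - q i.succ)

/-- the generator L of the dynamics of the chain coupled to two reservoirs -/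
def gen (γ lam T1 Tn : ℝ) (U1 U2 : Vc d → ℝ) (f : Phs (n+2) d → ℝ) (x : Phs (n+2) d) : ℝ :=
  (γ * (T1 * ∑ a, PD (fun y => PD f y (eR1 a)) x (eR1 a)
        - ∑ a, x.2.2.1 a * PD f x (eR1 a))
    + lam * ((∑ a, x.1 0 a * PD f x (eR1 a)) - ∑ a, x.2.2.1 a * PD f x (eP 0 a)))
  + (γ * (Tn * ∑ a, PD (fun y => PD f y (eRn a)) x (eRn a)
        - ∑ a, x.2.2.2 a * PD f x (eRn a))
    + lam * ((∑ a, x.1 (Fin.last (n+1)) a * PD f x (eRn a))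
        - ∑ a, x.2.2.2 a * PD f x (eP (Fin.last (n+1)) a)))
  + ∑ i, ((∑ a, x.1 i a * PD f x (eQ i a))
        - ∑ a, fderiv ℝ (Vtot U1 U2) x.2.1 (Pi.single i (Pi.single a 1)) * PD f x (eP i a))

/-- nat-indexed access to the oscillator coordinates (junk value outside the range) -/
def cfgNat (q : Cfg (n+2) d) (k : ℕ) : Vc d := if h : k < n + 2 then q ⟨k, h⟩ else 0

/-- local energies H_k, 0-indexed: k ∈ {0, …, n+1} -/
def Hloc (U1 U2 : Vc d → ℝ) (k : ℕ) (x : Phs (n+2) d) : ℝ :=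
  (∑ a, (cfgNat x.1 k a) ^ 2) / 2 + U1 (cfgNat x.2.1 k)
  + (if k = 0 then 0 else (1/2) * U2 (cfgNat x.2.1 (k-1) - cfgNat x.2.1 k))
  + (if k = n + 1 then 0 else (1/2) * U2 (cfgNat x.2.1 k - cfgNat x.2.1 (k+1)))

/-- heat flows Φ_j, j ∈ {0, …, n+2}: Φ_0 = −λr₁·p_0 is the flow from the left
reservoir into the chain, Φ_{n+2} = λrₙ·p_{n+1} the flow into the right reservoir,
and for 1 ≤ j ≤ n+1, Φ_j is the flow from the (0-indexed) oscillator j−1 to the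
oscillator j. -/
def heatFlow (lam : ℝ) (U2 : Vc d → ℝ) (j : ℕ) (x : Phs (n+2) d) : ℝ :=
  if j = 0 then - lam * ∑ a, x.2.2.1 a * x.1 0 a
  else if j = n + 2 then lam * ∑ a, x.2.2.2 a * x.1 (Fin.last (n+1)) a
  else ∑ a, ((cfgNat x.1 (j-1) a + cfgNat x.1 j a) / 2)
        * fderiv ℝ U2 (cfgNat x.2.1 (j-1) - cfgNat x.2.1 j) (Pi.single a 1)

/-- entropy production σ_j = (1/Tₙ − 1/T₁) Φ_j -/
def sigmaEP (lam T1 Tn : ℝ) (U2 : Vc d → ℝ) (j : ℕ) (x : Phs (n+2) d) : ℝ :=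
  (1 / Tn - 1 / T1) * heatFlow lam U2 j x

/-- two-temperatures Gibbs exponent R_j, j ∈ {0, …, n+2}: the first j oscillators
are weighted with 1/T₁, the remaining ones with 1/Tₙ. -/
def Rj (T1 Tn : ℝ) (U1 U2 : Vc d → ℝ) (j : ℕ) (x : Phs (n+2) d) : ℝ :=
  (1 / T1) * ((∑ a, (x.2.2.1 a) ^ 2) / 2 + ∑ k ∈ Finset.range j, Hloc U1 U2 k x)
  + (1 / Tn) * ((∑ k ∈ Finset.Ico j (n+2), Hloc U1 U2 k x) + (∑ a, (x.2.2.2 a) ^ 2) / 2)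

open MeasureTheory

/-!
Energy is balanced locally: `L H_k = Φ_k - Φ_{k+1}`. No second-order term survives, because `H_k`
does not depend on the reservoir variables, so `L H_k` is the derivative of `H_k` along a vector
field on the oscillator coordinates. In it the onsite forces cancel. The bond `j` does work at the
rates `∇U⁽²⁾ · p_j` and `-∇U⁽²⁾ · p_{j-1}` on its two ends; as its energy is shared equally between
them, the energy of either side changes by the average `Φ_j = ∇U⁽²⁾ · (p_{j-1} + p_j) / 2`, up to
sign. Integrating the balance gives `∫ Φ_k dμ = ∫ Φ_{k+1} dμ`.
-/

section MapSingle

variable {ι κ R M : Type*} [DecidableEq ι] [Fintype κ] [DecidableEq κ] [Semiring R]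
  [AddCommMonoid M] [Module R M]

theorem sum_smul_map_single (φ : (κ → R) →ₗ[R] M) (v : κ → R) :
    ∑ a, v a • φ (Pi.single a 1) = φ v := by
  conv_rhs => rw [pi_eq_sum_univ' v]
  simp only [map_sum, map_smul]

theorem sum_smul_map_single_single (φ : (ι → κ → R) →ₗ[R] M) (i : ι) (v : κ → R) :
    ∑ a, v a • φ (Pi.single i (Pi.single a 1)) = φ (Pi.single i v) :=
  sum_smul_map_single (φ ∘ₗ LinearMap.single R (fun _ => κ → R) i) v

theorem sum_sum_smul_map_single_single [Fintype ι] (φ : (ι → κ → R) →ₗ[R] M) (v : ι → κ → R) :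
    ∑ i, ∑ a, v i a • φ (Pi.single i (Pi.single a 1)) = φ v := by
  simp_rw [sum_smul_map_single_single, ← map_sum, Finset.univ_sum_single]

end MapSingle

section SumSingle

variable {E F : Type*} [Zero E] [AddCommMonoid F] {φ : ℕ → E → F}

theorem sum_apply_single_castSucc (hφ : ∀ j, φ j 0 = 0) (k : Fin (m + 1)) (w : E) :
    ∑ i : Fin m, φ i ((Pi.single k w : Fin (m + 1) → E) i.castSucc) =
      if (k : ℕ) = m then 0 else φ k w := by
  cases k using Fin.lastCases with
  | last => simp [hφ, Fin.castSucc_ne_last]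
  | cast k =>
    rw [Fintype.sum_eq_single k fun i hi => by simp [hφ, hi]]
    simp [k.2.ne]

theorem sum_apply_single_succ (hφ : ∀ j, φ j 0 = 0) (k : Fin (m + 1)) (w : E) :
    ∑ i : Fin m, φ (i + 1) ((Pi.single k w : Fin (m + 1) → E) i.succ) =
      if (k : ℕ) = 0 then 0 else φ k w := by
  cases k using Fin.cases with
  | zero => simp [hφ]
  | succ k =>
    rw [Fintype.sum_eq_single k fun i hi => by simp [hφ, hi]]
    simp

end SumSingle

theorem hasFDerivAt_half_sum_sq {ι : Type*} [Fintype ι] (v : ι → ℝ) :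
    HasFDerivAt (fun u : ι → ℝ => (∑ a, u a ^ 2) / 2)
      (∑ a, v a • ContinuousLinearMap.proj (R := ℝ) (φ := fun _ : ι => ℝ) a) v := by
  have h := (HasFDerivAt.fun_sum (u := Finset.univ) fun a _ =>
    (hasFDerivAt_apply (𝕜 := ℝ) a v).pow 2).mul_const (2⁻¹ : ℝ)
  refine h.congr_fderiv ?_
  ext u
  simp [Finset.mul_sum, mul_assoc]

theorem integral_eq_integral_zero_of_integral_sub_succ {X E : Type*} [MeasurableSpace X]
    [NormedAddCommGroup E] [NormedSpace ℝ E] {μ : Measure X} {Φ : ℕ → X → E} {N : ℕ}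
    (hΦ : ∀ j ≤ N, Integrable (Φ j) μ)
    (hsub : ∀ k < N, ∫ x, Φ k x - Φ (k + 1) x ∂μ = 0) {j : ℕ} (hj : j ≤ N) :
    ∫ x, Φ j x ∂μ = ∫ x, Φ 0 x ∂μ := by
  induction j with
  | zero => rfl
  | succ k ih =>
    have hk := hsub k hj
    rw [integral_sub (hΦ k (Nat.le_of_lt hj)) (hΦ (k + 1) hj), sub_eq_zero] at hk
    rw [← hk, ih (Nat.le_of_lt hj)]

/-- The coordinate map `cfgNat · k` as a continuous linear map. -/
def cfgNatCLM (k : ℕ) : Cfg (n + 2) d →L[ℝ] Vc d :=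
  if h : k < n + 2 then ContinuousLinearMap.proj (R := ℝ) (φ := fun _ => Vc d) ⟨k, h⟩ else 0

theorem cfgNatCLM_apply (k : ℕ) (q : Cfg (n + 2) d) : cfgNatCLM k q = cfgNat q k := by
  unfold cfgNatCLM cfgNat
  split_ifs <;> rfl

theorem cfgNat_coe (q : Cfg (n + 2) d) (i : Fin (n + 2)) : cfgNat q i = q i :=
  dif_pos i.2

theorem cfgNat_zero (k : ℕ) : cfgNat (0 : Cfg (n + 2) d) k = 0 := by
  rw [← cfgNatCLM_apply, map_zero]

/-- The momentum `p_k` as a continuous linear map on phase space. -/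
def momentumCLM (k : ℕ) : Phs (n + 2) d →L[ℝ] Vc d :=
  cfgNatCLM k ∘L ContinuousLinearMap.fst ℝ _ _

/-- The position `q_k` as a continuous linear map on phase space. -/
def positionCLM (k : ℕ) : Phs (n + 2) d →L[ℝ] Vc d :=
  cfgNatCLM k ∘L ContinuousLinearMap.fst ℝ _ _ ∘L ContinuousLinearMap.snd ℝ _ _

theorem momentumCLM_apply (k : ℕ) (x : Phs (n + 2) d) : momentumCLM k x = cfgNat x.1 k :=
  cfgNatCLM_apply k x.1

theorem positionCLM_apply (k : ℕ) (x : Phs (n + 2) d) : positionCLM k x = cfgNat x.2.1 k :=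
  cfgNatCLM_apply k x.2.1

/-- The differential of the interaction potential at the elongation `q_{j-1} - q_j` of the bond
between the oscillators `j - 1` and `j`. It is set to zero at the two ends `j = 0` and `j = n + 2`
of the chain, where there is no bond, so that all oscillators obey the same formulas. -/
def bondDifferential (U2 : Vc d → ℝ) (q : Cfg (n + 2) d) (j : ℕ) : Vc d →L[ℝ] ℝ :=
  if j = 0 ∨ j = n + 2 then 0 else fderiv ℝ U2 (cfgNat q (j - 1) - cfgNat q j)

section Derivatives

variable {U1 U2 : Vc d → ℝ}

/- `c` stands for the tests in `Hloc`: `k = 0`, with `j = k`, and `k = n + 1`, with `j = k + 1`. -/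
theorem hasFDerivAt_half_bond (hU2 : Differentiable ℝ U2) {c : Prop} [Decidable c] {j : ℕ}
    (hc : c ↔ j = 0 ∨ j = n + 2) (x : Phs (n + 2) d) :
    HasFDerivAt (fun y : Phs (n + 2) d =>
        if c then 0 else 1 / 2 * U2 (cfgNat y.2.1 (j - 1) - cfgNat y.2.1 j))
      ((1 / 2 : ℝ) • bondDifferential U2 x.2.1 j ∘L (positionCLM (j - 1) - positionCLM j)) x := by
  by_cases h : c
  · simpa [bondDifferential, h, hc.1 h] using hasFDerivAt_const (0 : ℝ) x
  · simp only [bondDifferential, h, mt hc.2 h, if_false, ← positionCLM_apply]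
    exact ((hU2 _).hasFDerivAt.comp x
      (positionCLM (j - 1) - positionCLM j).hasFDerivAt).const_mul (1 / 2)

theorem PD_Hloc (hU1 : Differentiable ℝ U1) (hU2 : Differentiable ℝ U2) (k : Fin (n + 2))
    (x v : Phs (n + 2) d) :
    PD (Hloc U1 U2 k) x v = x.1 k ⬝ᵥ v.1 k + fderiv ℝ U1 (x.2.1 k) (v.2.1 k)
      + 1 / 2 * bondDifferential U2 x.2.1 k (cfgNat v.2.1 (k - 1) - v.2.1 k)
      + 1 / 2 * bondDifferential U2 x.2.1 (k + 1) (v.2.1 k - cfgNat v.2.1 (k + 1)) := by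
  have hkin := (hasFDerivAt_half_sum_sq (momentumCLM k x)).comp x (momentumCLM k).hasFDerivAt
  have hsite := (hU1 (positionCLM k x)).hasFDerivAt.comp x (positionCLM k).hasFDerivAt
  have hleft := hasFDerivAt_half_bond hU2 (c := (k : ℕ) = 0) (j := k) (by grind) x
  have hright := hasFDerivAt_half_bond hU2 (c := (k : ℕ) = n + 1) (j := k + 1) (by grind) x
  have hsum := ((hkin.add hsite).add hleft).add hright
  have hH : HasFDerivAt (Hloc U1 U2 k) _ x := hsum.congr_of_eventuallyEq <| .of_forall fun y => by
    simp [Hloc, momentumCLM_apply, positionCLM_apply]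
  rw [PD, hH.fderiv]
  simp [momentumCLM_apply, positionCLM_apply, cfgNat_coe, dotProduct]

theorem fderiv_Vtot_apply (hU1 : Differentiable ℝ U1) (hU2 : Differentiable ℝ U2)
    (q v : Cfg (n + 2) d) :
    fderiv ℝ (Vtot U1 U2) q v = ∑ i, fderiv ℝ U1 (q i) (v i) +
      ∑ i : Fin (n + 1), fderiv ℝ U2 (q i.castSucc - q i.succ) (v i.castSucc - v i.succ) := by
  let Q (i : Fin (n + 2)) : Cfg (n + 2) d →L[ℝ] Vc d :=
    ContinuousLinearMap.proj (R := ℝ) (φ := fun _ => Vc d) i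
  have hsite (i : Fin (n + 2)) := (hU1 (Q i q)).hasFDerivAt.comp q (Q i).hasFDerivAt
  have hbond (i : Fin (n + 1)) := (hU2 ((Q i.castSucc - Q i.succ) q)).hasFDerivAt.comp q
    (Q i.castSucc - Q i.succ).hasFDerivAt
  have hV : HasFDerivAt (Vtot U1 U2) _ q :=
    (HasFDerivAt.fun_sum fun i _ => hsite i).add (HasFDerivAt.fun_sum fun i _ => hbond i)
  rw [hV.fderiv]
  simp [Q]

theorem fderiv_Vtot_single (hU1 : Differentiable ℝ U1) (hU2 : Differentiable ℝ U2)
    (q : Cfg (n + 2) d) (k : Fin (n + 2)) (w : Vc d) :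
    fderiv ℝ (Vtot U1 U2) q (Pi.single k w) = fderiv ℝ U1 (q k) w
      + bondDifferential U2 q (k + 1) w - bondDifferential U2 q k w := by
  have hsite :
      ∑ i, fderiv ℝ U1 (q i) ((Pi.single k w : Cfg (n + 2) d) i) = fderiv ℝ U1 (q k) w := by
    rw [Fintype.sum_eq_single k fun i hi => by simp [hi], Pi.single_eq_same]
  have hbond (i : Fin (n + 1)) :
      fderiv ℝ U2 (q i.castSucc - q i.succ) = bondDifferential U2 q (i + 1) := by
    have hi : ¬((i : ℕ) + 1 = 0 ∨ (i : ℕ) + 1 = n + 2) := by grind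
    rw [bondDifferential, if_neg hi, ← cfgNat_coe q i.castSucc, ← cfgNat_coe q i.succ]
    simp
  have hright := sum_apply_single_castSucc (φ := fun j => bondDifferential U2 q (j + 1))
    (fun _ => map_zero _) k w
  have hleft := sum_apply_single_succ (φ := fun j => bondDifferential U2 q j)
    (fun _ => map_zero _) k w
  rw [fderiv_Vtot_apply hU1 hU2, hsite]
  simp_rw [hbond, map_sub]
  rw [Finset.sum_sub_distrib, hright, hleft, add_sub_assoc]
  congr 2
  · exact ite_eq_right_iff.2 fun hk => by simp [bondDifferential, hk]
  · exact ite_eq_right_iff.2 fun hk => by simp [bondDifferential, hk]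

end Derivatives

/-- The gradient of `V` on configuration space, with components `∂V / ∂q_{i,a}`. -/
def cfgGradient (V : Cfg m d → ℝ) (q : Cfg m d) : Cfg m d :=
  fun i a => fderiv ℝ V q (Pi.single i (Pi.single a 1))

theorem dotProduct_cfgGradient (V : Cfg m d → ℝ) (q : Cfg m d) (i : Fin m) (w : Vc d) :
    w ⬝ᵥ cfgGradient V q i = fderiv ℝ V q (Pi.single i w) :=
  sum_smul_map_single_single (fderiv ℝ V q : Cfg m d →ₗ[ℝ] ℝ) i w

/-- The velocity of the oscillators: Hamilton's equations together with the forces `-λ r₁` and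
`-λ rₙ` exerted by the reservoirs on the ends of the chain. The reservoir components, on which the
local energies do not depend, are set to zero. -/
def oscillatorDrift (lam : ℝ) (V : Cfg (n + 2) d → ℝ) (x : Phs (n + 2) d) : Phs (n + 2) d :=
  (-cfgGradient V x.2.1 - lam • (Pi.single 0 x.2.2.1 : Cfg (n + 2) d)
    - lam • (Pi.single (Fin.last (n + 1)) x.2.2.2 : Cfg (n + 2) d), x.1, 0, 0)

theorem dotProduct_oscillatorDrift (lam : ℝ) (V : Cfg (n + 2) d → ℝ) (x : Phs (n + 2) d)
    (k : Fin (n + 2)) :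
    x.1 k ⬝ᵥ (oscillatorDrift lam V x).1 k = -fderiv ℝ V x.2.1 (Pi.single k (x.1 k))
      - (if k = 0 then lam * (x.1 0 ⬝ᵥ x.2.2.1) else 0)
      - (if k = Fin.last (n + 1) then lam * (x.1 (Fin.last (n + 1)) ⬝ᵥ x.2.2.2) else 0) := by
  simp only [oscillatorDrift, Pi.sub_apply, Pi.neg_apply, Pi.smul_apply, dotProduct_sub,
    dotProduct_neg, dotProduct_smul, dotProduct_cfgGradient, Pi.single_apply, smul_eq_mul]
  split_ifs <;> simp_all

section PartialDerivatives

variable (f : Phs m d → ℝ) (x : Phs m d)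

theorem sum_mul_PD_eP (i : Fin m) (v : Vc d) :
    ∑ a, v a * PD f x (eP i a) = PD f x (Pi.single i v, 0, 0, 0) :=
  sum_smul_map_single_single
    (fderiv ℝ f x ∘L ContinuousLinearMap.inl ℝ _ _ : Cfg m d →ₗ[ℝ] ℝ) i v

theorem sum_sum_mul_PD_eP (u : Cfg m d) :
    ∑ i, ∑ a, u i a * PD f x (eP i a) = PD f x (u, 0, 0, 0) :=
  sum_sum_smul_map_single_single
    (fderiv ℝ f x ∘L ContinuousLinearMap.inl ℝ _ _ : Cfg m d →ₗ[ℝ] ℝ) u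

theorem sum_sum_mul_PD_eQ (u : Cfg m d) :
    ∑ i, ∑ a, u i a * PD f x (eQ i a) = PD f x (0, u, 0, 0) :=
  sum_sum_smul_map_single_single (fderiv ℝ f x ∘L ContinuousLinearMap.inr ℝ _ _ ∘L
    ContinuousLinearMap.inl ℝ _ _ : Cfg m d →ₗ[ℝ] ℝ) u

end PartialDerivatives

theorem PD_oscillatorDrift (lam : ℝ) (V : Cfg (n + 2) d → ℝ) (f : Phs (n + 2) d → ℝ)
    (x : Phs (n + 2) d) :
    PD f x (oscillatorDrift lam V x) = PD f x (0, x.1, 0, 0) - PD f x (cfgGradient V x.2.1, 0, 0, 0)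
      - lam * PD f x (Pi.single 0 x.2.2.1, 0, 0, 0)
      - lam * PD f x (Pi.single (Fin.last (n + 1)) x.2.2.2, 0, 0, 0) := by
  have hdrift : oscillatorDrift lam V x = (0, x.1, 0, 0) - (cfgGradient V x.2.1, 0, 0, 0)
      - lam • (Pi.single 0 x.2.2.1, 0, 0, 0)
      - lam • (Pi.single (Fin.last (n + 1)) x.2.2.2, 0, 0, 0) := by
    simp [oscillatorDrift]
  simp only [hdrift, PD, map_sub, map_smul, smul_eq_mul]

theorem gen_eq_PD_oscillatorDrift (γ lam T1 Tn : ℝ) (U1 U2 : Vc d → ℝ) {f : Phs (n + 2) d → ℝ}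
    (hf1 : ∀ y a, PD f y (eR1 a) = 0) (hfn : ∀ y a, PD f y (eRn a) = 0) (x : Phs (n + 2) d) :
    gen γ lam T1 Tn U1 U2 f x = PD f x (oscillatorDrift lam (Vtot U1 U2) x) := by
  have hconst (v : Phs (n + 2) d) : PD (fun _ => 0) x v = 0 := by simp [PD]
  have hgrad : ∑ i, ∑ a, fderiv ℝ (Vtot U1 U2) x.2.1 (Pi.single i (Pi.single a 1)) * PD f x (eP i a)
      = PD f x (cfgGradient (Vtot U1 U2) x.2.1, 0, 0, 0) :=
    sum_sum_mul_PD_eP f x (cfgGradient (Vtot U1 U2) x.2.1)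
  rw [gen, Finset.sum_sub_distrib, hgrad, sum_sum_mul_PD_eQ, PD_oscillatorDrift]
  simp only [hf1, hfn, hconst, mul_zero, Finset.sum_const_zero, sum_mul_PD_eP]
  ring

theorem heatFlow_eq (lam : ℝ) (U2 : Vc d → ℝ) (j : ℕ) (x : Phs (n + 2) d) :
    heatFlow lam U2 j x = 1 / 2 * bondDifferential U2 x.2.1 j (cfgNat x.1 (j - 1) + cfgNat x.1 j)
      - (if j = 0 then lam * (x.1 0 ⬝ᵥ x.2.2.1) else 0)
      + (if j = n + 2 then lam * (x.1 (Fin.last (n + 1)) ⬝ᵥ x.2.2.2) else 0) := by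
  by_cases h0 : j = 0
  · simp [heatFlow, bondDifferential, h0, dotProduct, mul_comm]
  by_cases hn : j = n + 2
  · simp [heatFlow, bondDifferential, hn, dotProduct, mul_comm]
  rw [heatFlow, bondDifferential, if_neg h0, if_neg hn, if_neg (not_or.2 ⟨h0, hn⟩), if_neg h0,
    if_neg hn, sub_zero, add_zero]
  set B : Vc d →L[ℝ] ℝ := fderiv ℝ U2 (cfgNat x.2.1 (j - 1) - cfgNat x.2.1 j)
  have hB : ∑ a, (cfgNat x.1 (j - 1) + cfgNat x.1 j) a * B (Pi.single a 1) =
      B (cfgNat x.1 (j - 1) + cfgNat x.1 j) := sum_smul_map_single (B : Vc d →ₗ[ℝ] ℝ) _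
  rw [← hB, Finset.mul_sum]
  refine Finset.sum_congr rfl fun a _ => ?_
  rw [Pi.add_apply]
  ring

theorem gen_Hloc {U1 U2 : Vc d → ℝ} (hU1 : Differentiable ℝ U1) (hU2 : Differentiable ℝ U2)
    (γ lam T1 Tn : ℝ) (k : Fin (n + 2)) (x : Phs (n + 2) d) :
    gen γ lam T1 Tn U1 U2 (Hloc U1 U2 k) x = heatFlow lam U2 k x - heatFlow lam U2 (k + 1) x := by
  have hR1 (y : Phs (n + 2) d) (a : Fin d) : PD (Hloc U1 U2 k) y (eR1 a) = 0 := by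
    simp [PD_Hloc hU1 hU2, eR1, cfgNat_zero]
  have hRn (y : Phs (n + 2) d) (a : Fin d) : PD (Hloc U1 U2 k) y (eRn a) = 0 := by
    simp [PD_Hloc hU1 hU2, eRn, cfgNat_zero]
  rw [gen_eq_PD_oscillatorDrift γ lam T1 Tn U1 U2 hR1 hRn, PD_Hloc hU1 hU2,
    dotProduct_oscillatorDrift, fderiv_Vtot_single hU1 hU2, heatFlow_eq, heatFlow_eq]
  simp only [oscillatorDrift, map_sub, map_add, cfgNat_coe, Fin.ext_iff, Fin.val_zero, Fin.val_last,
    Nat.add_sub_cancel, Nat.add_right_cancel_iff, k.2.ne, k.val.succ_ne_zero, if_false]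
  ring

theorem stmt8_general {U1 U2 : Vc d → ℝ} (hU1 : Differentiable ℝ U1) (hU2 : Differentiable ℝ U2)
    (γ lam T1 Tn : ℝ) (μ : Measure (Phs (n + 2) d))
    (hΦint : ∀ j ≤ n + 2, Integrable (heatFlow lam U2 j) μ)
    (hinv : ∀ k ≤ n + 1, ∫ x, gen γ lam T1 Tn U1 U2 (Hloc U1 U2 k) x ∂μ = 0) :
    (∀ j ≤ n + 2, ∫ x, heatFlow lam U2 j x ∂μ = ∫ x, heatFlow lam U2 0 x ∂μ) ∧
      ∀ j j', j ≤ n + 2 → j' ≤ n + 2 →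
        ∫ x, sigmaEP lam T1 Tn U2 j x ∂μ = ∫ x, sigmaEP lam T1 Tn U2 j' x ∂μ := by
  have hbalance (k : ℕ) (hk : k < n + 2) :
      ∫ x, heatFlow lam U2 k x - heatFlow lam U2 (k + 1) x ∂μ = 0 := by
    simpa only [gen_Hloc hU1 hU2 γ lam T1 Tn ⟨k, hk⟩] using hinv k (Nat.le_of_lt_succ hk)
  have hflow (j : ℕ) (hj : j ≤ n + 2) : ∫ x, heatFlow lam U2 j x ∂μ = ∫ x, heatFlow lam U2 0 x ∂μ :=
    integral_eq_integral_zero_of_integral_sub_succ hΦint hbalance hj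
  refine ⟨hflow, fun j j' hj hj' => ?_⟩
  simp only [sigmaEP, integral_const_mul, hflow j hj, hflow j' hj']

/-- if μ is a Borel probability measure on X for which every heat
flow Φ_j and every L H_k is integrable and `∫ L H_k dμ = 0` (infinitesimal
invariance tested on the local energies), then the mean heat flow is the same
everywhere along the chain: `∫ Φ_j dμ = ∫ Φ₀ dμ` for all j; in particular the
mean entropy production `∫ σ_j dμ` does not depend on j. -/
theorem stmt8 (n d : ℕ) (hd : 1 ≤ d) (γ lam T1 Tn : ℝ)
    (hγ : 0 < γ) (hlam : 0 < lam) (hT1 : 0 < T1) (hTn : 0 < Tn)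
    (U1 U2 : Vc d → ℝ) (hU1 : ContDiff ℝ (⊤ : ℕ∞) U1) (hU2 : ContDiff ℝ (⊤ : ℕ∞) U2)
    (μ : Measure (Phs (n+2) d)) [IsProbabilityMeasure μ]
    (hΦint : ∀ j : ℕ, j ≤ n + 2 → Integrable (heatFlow lam U2 j) μ)
    (hLHint : ∀ k : ℕ, k ≤ n + 1 →
      Integrable (gen γ lam T1 Tn U1 U2 (Hloc U1 U2 k)) μ)
    (hinv : ∀ k : ℕ, k ≤ n + 1 →
      ∫ x, gen γ lam T1 Tn U1 U2 (Hloc U1 U2 k) x ∂μ = 0) :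
    (∀ j : ℕ, j ≤ n + 2 →
        ∫ x, heatFlow lam U2 j x ∂μ = ∫ x, heatFlow lam U2 0 x ∂μ)
      ∧ ∀ j j' : ℕ, j ≤ n + 2 → j' ≤ n + 2 →
        ∫ x, sigmaEP lam T1 Tn U2 j x ∂μ = ∫ x, sigmaEP lam T1 Tn U2 j' x ∂μ :=
  stmt8_general (hU1.differentiable (by simp)) (hU2.differentiable (by simp)) γ lam T1 Tn μ
    hΦint hinv

end
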